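/- Assume additionally λ₁ < 0, λ₂ > 0, α₁ < 4 < α₂, and let θ be a real number with 0 < θ < 1 and (α₂−4)/(α₃−α₂) < θ; set β = (α₃−α₂)θ + α₂. Let M ≥ 0 and C, δ > 0 be real numbers such that N₁ ≤ C·M + δ·N₃ and δ·|λ₁|·(β−α₁)/(α₁+2) ≤ |λ₃|·(α₃−α₂)·(1−θ)/(α₃+2). Then Y ≥ ((β − 4)/2)·G − (|λ₁|·C·(β−α₁)/(α₁+2))·M − β·E. -/

import Mathlib

/-!
In `Y + β * E` the `Nⱼ` term has coefficient `lⱼ * (β - αⱼ) / (αⱼ + 2)`. Taking `β` between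
`α₂` and `α₃` makes the coefficients of the defocusing middle term and of the focusing top term
both nonnegative. Only the lowest power can contribute negatively; interpolation bounds it by the
mass plus a multiple of `N₃`, small enough to be absorbed by the top term.
-/

section MultiPower

variable {ι : Type*} [Fintype ι]

/-- Conserved energy of the nonlinear Schrödinger equation `i u_t + u_xx = ∑ j, l j |u|^(α j) u`, in
terms of the kinetic norm `G = ‖u_x‖²` and the potential norms `N j = ‖u‖_{α j + 2}^(α j + 2)`. -/
noncomputable def nlsEnergy (G : ℝ) (l α N : ι → ℝ) : ℝ :=
  G / 2 + ∑ j, l j * N j / (α j + 2)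

/-- Virial quantity of the same equation, normalized as in `V'' = -4 Y`, where `V` is the
variance: when it stays positive, it drives blow-up. -/
noncomputable def nlsVirial (G : ℝ) (l α N : ι → ℝ) : ℝ :=
  -2 * G - ∑ j, l j * α j * N j / (α j + 2)

theorem nlsVirial_add_mul_nlsEnergy (β G : ℝ) (l α N : ι → ℝ) :
    nlsVirial G l α N + β * nlsEnergy G l α N =
      (β - 4) / 2 * G + ∑ j, l j * (β - α j) / (α j + 2) * N j := by
  have potential_terms : ∑ j, l j * (β - α j) / (α j + 2) * N j =
      β * ∑ j, l j * N j / (α j + 2) - ∑ j, l j * α j * N j / (α j + 2) := by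
    rw [Finset.mul_sum, ← Finset.sum_sub_distrib]
    exact Finset.sum_congr rfl fun j _ => by ring
  rw [nlsVirial, nlsEnergy, potential_terms]
  ring

end MultiPower

theorem mul_le_mul_add_mul_of_le_add_mul {R : Type*} [CommSemiring R] [PartialOrder R]
    [IsOrderedRing R] {a b c d x y : R} (hc : 0 ≤ c) (hy : 0 ≤ y) (hx : x ≤ a + b * y)
    (hbc : b * c ≤ d) : c * x ≤ c * a + d * y :=
  calc
    c * x ≤ c * (a + b * y) := mul_le_mul_of_nonneg_left hx hc
    _ = c * a + b * c * y := by ring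
    _ ≤ c * a + d * y := by gcongr

theorem virial_case4B_general
    {G N₁ N₂ N₃ : ℝ} (hN₁ : 0 ≤ N₁) (hN₂ : 0 ≤ N₂) (hN₃ : 0 ≤ N₃)
    {l₁ l₂ l₃ : ℝ} (hl₂ : 0 ≤ l₂) (hl₃ : l₃ ≤ 0)
    {α₁ α₂ α₃ : ℝ} (hα₁ : -2 < α₁) (h₁₂ : α₁ ≤ α₂) (h₂₃ : α₂ ≤ α₃)
    {E Y : ℝ}
    (hE : E = G / 2 + l₁ * N₁ / (α₁ + 2) + l₂ * N₂ / (α₂ + 2) + l₃ * N₃ / (α₃ + 2))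
    (hY : Y = -2 * G - l₁ * α₁ * N₁ / (α₁ + 2) - l₂ * α₂ * N₂ / (α₂ + 2) -
      l₃ * α₃ * N₃ / (α₃ + 2))
    {θ β : ℝ} (hθ : 0 ≤ θ) (hβ : β = (α₃ - α₂) * θ + α₂)
    {M C δ : ℝ} (hinterp : N₁ ≤ C * M + δ * N₃)
    (hδsmall : δ * |l₁| * (β - α₁) / (α₁ + 2) ≤ |l₃| * (α₃ - α₂) * (1 - θ) / (α₃ + 2)) :
    Y ≥ ((β - 4) / 2) * G - (|l₁| * C * (β - α₁) / (α₁ + 2)) * M - β * E := by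
  have hβ₂ : 0 ≤ β - α₂ := by
    rw [hβ, add_sub_cancel_right]
    exact mul_nonneg (sub_nonneg.2 h₂₃) hθ
  have weight₁_nonneg : 0 ≤ (β - α₁) / (α₁ + 2) := div_nonneg (by linarith) (by linarith)
  have low_power : -(|l₁| * ((β - α₁) / (α₁ + 2)) * N₁) ≤ l₁ * (β - α₁) / (α₁ + 2) * N₁ := by
    rw [mul_div_assoc, ← neg_mul, ← neg_mul]
    gcongr
    exact neg_abs_le l₁
  have absorption : |l₁| * ((β - α₁) / (α₁ + 2)) * N₁ ≤
      |l₁| * ((β - α₁) / (α₁ + 2)) * (C * M) + |l₃| * (α₃ - α₂) * (1 - θ) / (α₃ + 2) * N₃ :=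
    mul_le_mul_add_mul_of_le_add_mul (mul_nonneg (abs_nonneg l₁) weight₁_nonneg) hN₃ hinterp
      (by rwa [← mul_assoc, ← mul_div_assoc])
  have middle_power : 0 ≤ l₂ * (β - α₂) / (α₂ + 2) * N₂ :=
    mul_nonneg (div_nonneg (mul_nonneg hl₂ hβ₂) (by linarith)) hN₂
  have top_power : l₃ * (β - α₃) / (α₃ + 2) * N₃ =
      |l₃| * (α₃ - α₂) * (1 - θ) / (α₃ + 2) * N₃ := by
    rw [abs_of_nonpos hl₃, hβ]
    ring
  have virial_identity : Y + β * E = (β - 4) / 2 * G + (l₁ * (β - α₁) / (α₁ + 2) * N₁ +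
      l₂ * (β - α₂) / (α₂ + 2) * N₂ + l₃ * (β - α₃) / (α₃ + 2) * N₃) := by
    simpa [nlsVirial, nlsEnergy, Fin.sum_univ_three, hE, hY, sub_sub, add_assoc] using
      nlsVirial_add_mul_nlsEnergy β G ![l₁, l₂, l₃] ![α₁, α₂, α₃] ![N₁, N₂, N₃]
  linear_combination low_power + absorption + middle_power - top_power - virial_identity

theorem virial_case4B
    (G N₁ N₂ N₃ : ℝ) (hG : 0 ≤ G) (hN₁ : 0 ≤ N₁) (hN₂ : 0 ≤ N₂) (hN₃ : 0 ≤ N₃)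
    (l₁ l₂ l₃ : ℝ) (hl₃ : l₃ < 0)
    (α₁ α₂ α₃ : ℝ) (hα₁ : 0 < α₁) (h₁₂ : α₁ < α₂) (h₂₃ : α₂ < α₃)
    (E Y : ℝ)
    (hE : E = G / 2 + l₁ * N₁ / (α₁ + 2) + l₂ * N₂ / (α₂ + 2) + l₃ * N₃ / (α₃ + 2))
    (hY : Y = -2 * G - l₁ * α₁ * N₁ / (α₁ + 2) - l₂ * α₂ * N₂ / (α₂ + 2) - l₃ * α₃ * N₃ / (α₃ + 2))
    (hl₁ : l₁ < 0) (hl₂ : 0 < l₂) (hα₁4 : α₁ < 4) (h4α₂ : 4 < α₂)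
    (θ β : ℝ) (hθ₀ : 0 < θ) (hθ₂ : θ < 1) (hθ₁ : (α₂ - 4) / (α₃ - α₂) < θ)
    (hβ : β = (α₃ - α₂) * θ + α₂)
    (M C δ : ℝ) (hM : 0 ≤ M) (hC : 0 < C) (hδ : 0 < δ)
    (hinterp : N₁ ≤ C * M + δ * N₃)
    (hδsmall : δ * |l₁| * (β - α₁) / (α₁ + 2) ≤ |l₃| * (α₃ - α₂) * (1 - θ) / (α₃ + 2)) :
    Y ≥ ((β - 4) / 2) * G - (|l₁| * C * (β - α₁) / (α₁ + 2)) * M - β * E :=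
  virial_case4B_general hN₁ hN₂ hN₃ hl₂.le hl₃.le (by linarith) h₁₂.le h₂₃.le hE hY hθ₀.le hβ
    hinterp hδsmall
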